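/- If B ∈ 𝔽₂, then every MDT-optimal schedule is WDT-optimal, i.e., every configuration has discovery time at most max(B)·|C| − 1. -/

import Mathlib

open scoped Classical

/-- A listening schedule over channel set `C`: a set of (channel, time-slot) pairs
such that all scanned channels belong to `C` and at most one channel is scanned
per time slot. -/
def IsSchedule (C : Finset ℕ) (L : Set (ℕ × ℕ)) : Prop :=
  (∀ p ∈ L, p.1 ∈ C) ∧ ∀ c c' t : ℕ, (c, t) ∈ L → (c', t) ∈ L → c = c'

/-- Configuration `(c, b, δ)` is discovered at time slot `t` by the schedule `L`. -/
def DiscoveredAt (L : Set (ℕ × ℕ)) (c b δ t : ℕ) : Prop :=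
  (c, t) ∈ L ∧ t % b = δ

/-- The discovery time `T_κ(L)` of configuration `κ = (c, b, δ)`: the least time slot
at which it is discovered (junk value `0` if it is never discovered). -/
noncomputable def discTime (L : Set (ℕ × ℕ)) (c b δ : ℕ) : ℕ :=
  sInf {t | DiscoveredAt L c b δ t}

/-- A schedule is complete if every configuration in `K_BC` is discovered at some slot. -/
def Complete (C B : Finset ℕ) (L : Set (ℕ × ℕ)) : Prop :=
  ∀ c ∈ C, ∀ b ∈ B, ∀ δ < b, ∃ t, DiscoveredAt L c b δ t

/-- The set of all configurations `K_BC`, as a finite set of triples `(c, b, δ)`. -/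
def KBC (C B : Finset ℕ) : Finset (ℕ × ℕ × ℕ) :=
  (C ×ˢ B ×ˢ Finset.range (B.sup id)).filter fun κ => κ.2.2 < κ.2.1

/-- The weight `P_κ = 1/(b·|B|·|C|)` of a configuration with beacon period `b`. -/
noncomputable def weight (C B : Finset ℕ) (b : ℕ) : ℝ :=
  (1 : ℝ) / ((b : ℝ) * (B.card : ℝ) * (C.card : ℝ))

/-- Total weight of configurations discovered by `L` at some slot `≤ t` (the NDoT curve). -/
noncomputable def discSum (C B : Finset ℕ) (L : Set (ℕ × ℕ)) (t : ℕ) : ℝ :=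
  ∑ κ ∈ (KBC C B).filter (fun κ => ∃ t' ≤ t, DiscoveredAt L κ.1 κ.2.1 κ.2.2 t'),
    weight C B κ.2.1

/-- The mean discovery time `MDT(L) = Σ_{κ ∈ K_BC} P_κ · T_κ(L)`. -/
noncomputable def MDT (C B : Finset ℕ) (L : Set (ℕ × ℕ)) : ℝ :=
  ∑ κ ∈ KBC C B, weight C B κ.2.1 * (discTime L κ.1 κ.2.1 κ.2.2 : ℝ)

/-- A schedule is recursive if it is complete and, for every `b ∈ B`, every
configuration with beacon period `b` has discovery time at most `b·|C| - 1`. -/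
def Recursive (C B : Finset ℕ) (L : Set (ℕ × ℕ)) : Prop :=
  Complete C B L ∧
  ∀ c ∈ C, ∀ b ∈ B, ∀ δ < b, discTime L c b δ ≤ b * C.card - 1

/-- `D(c,t)`: the expected number of new discoveries when scanning channel `c` at slot `t`,
i.e. the sum of weights of configurations `(c, b, t mod b)`, `b ∈ B`, not yet
discovered by `L` before slot `t`. -/
noncomputable def gain (C B : Finset ℕ) (L : Set (ℕ × ℕ)) (c t : ℕ) : ℝ :=
  ∑ b ∈ B.filter (fun b => ¬ ∃ t' < t, DiscoveredAt L c b (t % b) t'),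
    weight C B b

/-- A schedule is greedy if, whenever some channel has positive expected gain at slot `t`,
it scans a channel maximizing the expected gain at slot `t`. -/
def Greedy (C B : Finset ℕ) (L : Set (ℕ × ℕ)) : Prop :=
  IsSchedule C L ∧
  ∀ t : ℕ, (∃ c ∈ C, 0 < gain C B L c t) →
    ∃ c ∈ C, (c, t) ∈ L ∧ ∀ c' ∈ C, gain C B L c' t ≤ gain C B L c t

/-!
Fix a common multiple `M` of the beacon periods, so that what a slot can discover on a channel
depends only on its residue mod `M`. Suppose `(c, b, δ)` is discovered only at `T ≥ M * |C|`. Then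
`[0, T)` has at least `|C|` slots congruent to `T` mod `M`, none of which scans `c`. By pigeonhole
on the other `|C| - 1` channels, one of these slots is idle or repeats a channel already scanned at
an earlier slot of the same residue, so it discovers nothing new. Retuning it to `c` delays no
discovery and makes that of `(c, b, δ)` strictly earlier, so the schedule was not MDT-optimal.
-/

section DiscoveryTime

variable {L : Set (ℕ × ℕ)} {c b δ t : ℕ}

theorem discoveredAt_discTime (h : ∃ t, DiscoveredAt L c b δ t) :
    DiscoveredAt L c b δ (discTime L c b δ) :=
  Nat.sInf_mem h

theorem DiscoveredAt.discTime_le (h : DiscoveredAt L c b δ t) : discTime L c b δ ≤ t :=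
  Nat.sInf_le h

end DiscoveryTime

section MeanDiscoveryTime

variable {C B : Finset ℕ} {c b δ : ℕ}

theorem mem_KBC : (c, b, δ) ∈ KBC C B ↔ c ∈ C ∧ b ∈ B ∧ δ < b := by
  simp only [KBC, Finset.mem_filter, Finset.mem_product, Finset.mem_range]
  constructor
  · rintro ⟨⟨hc, hb, -⟩, hδ⟩
    exact ⟨hc, hb, hδ⟩
  · rintro ⟨hc, hb, hδ⟩
    exact ⟨⟨hc, hb, hδ.trans_le (Finset.le_sup (f := id) hb)⟩, hδ⟩

theorem weight_nonneg (C B : Finset ℕ) (b : ℕ) : 0 ≤ weight C B b := by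
  unfold weight
  positivity

theorem weight_pos (hC : C.Nonempty) (hB : B.Nonempty) (hb : 0 < b) : 0 < weight C B b :=
  one_div_pos.mpr <|
    mul_pos (mul_pos (mod_cast hb) (mod_cast hB.card_pos)) (mod_cast hC.card_pos)

theorem MDT_lt_MDT {L L' : Set (ℕ × ℕ)}
    (hle : ∀ c ∈ C, ∀ b ∈ B, ∀ δ < b, discTime L' c b δ ≤ discTime L c b δ)
    (hc : c ∈ C) (hb : b ∈ B) (hδ : δ < b) (hlt : discTime L' c b δ < discTime L c b δ) :
    MDT C B L' < MDT C B L := by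
  refine Finset.sum_lt_sum ?_ ⟨(c, b, δ), mem_KBC.mpr ⟨hc, hb, hδ⟩, ?_⟩
  · rintro ⟨x, d, ε⟩ hκ
    obtain ⟨hx, hd, hε⟩ := mem_KBC.mp hκ
    exact mul_le_mul_of_nonneg_left (mod_cast hle x hx d hd ε hε) (weight_nonneg C B d)
  · exact mul_lt_mul_of_pos_left (mod_cast hlt) (weight_pos ⟨c, hc⟩ ⟨b, hb⟩ (by lia))

end MeanDiscoveryTime

/-- The slot `s` is redundant modulo `M` if every channel scanned at `s` has already been scanned at
an earlier slot congruent to `s`. When all beacon periods divide `M`, such a slot discovers nothing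
new. Idle slots are redundant. -/
def IsRedundantSlot (M : ℕ) (L : Set (ℕ × ℕ)) (s : ℕ) : Prop :=
  ∀ c, (c, s) ∈ L → ∃ t < s, t ≡ s [MOD M] ∧ (c, t) ∈ L

/-- The schedule that scans `c` at slot `s` and agrees with `L` at every other slot. -/
def retune (L : Set (ℕ × ℕ)) (c s : ℕ) : Set (ℕ × ℕ) :=
  insert (c, s) {p ∈ L | p.2 ≠ s}

section RedundantSlots

variable {L : Set (ℕ × ℕ)} {M : ℕ}

theorem exists_isRedundantSlot_of_card_lt {S D : Finset ℕ} (hcard : D.card < S.card)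
    (hcong : ∀ s ∈ S, ∀ t ∈ S, s ≡ t [MOD M]) (hscan : ∀ s ∈ S, ∀ c, (c, s) ∈ L → c ∈ D) :
    ∃ s ∈ S, IsRedundantSlot M L s := by
  by_contra! hnone
  have hfirst : ∀ s ∈ S, ∃ c, (c, s) ∈ L ∧ ∀ t < s, t ≡ s [MOD M] → (c, t) ∉ L := by
    intro s hs
    simpa only [IsRedundantSlot, not_forall, exists_prop, not_exists, not_and] using hnone s hs
  choose! f hf hf_first using hfirst
  obtain ⟨s, hs, t, ht, hst, hfst⟩ := Finset.exists_ne_map_eq_of_card_lt_of_maps_to hcard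
    (fun s hs => hscan s hs (f s) (hf s hs))
  rcases hst.lt_or_gt with hlt | hgt
  · exact hf_first t ht s hlt (hcong s hs t ht) (hfst ▸ hf s hs)
  · exact hf_first s hs t hgt (hcong t ht s hs) (hfst ▸ hf t ht)

theorem le_card_filter_modEq {n T : ℕ} (hM : 0 < M) (v : ℕ) (hT : M * n ≤ T) :
    n ≤ ((Finset.range T).filter (· ≡ v [MOD M])).card := by
  rw [← Nat.count_eq_card_filter_range, Nat.count_modEq_card _ hM]
  exact ((Nat.le_div_iff_mul_le hM).mpr (Nat.mul_comm M n ▸ hT)).trans (Nat.le_add_right _ _)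

theorem IsSchedule.exists_isRedundantSlot_lt {C : Finset ℕ} (hL : IsSchedule C L) (hM : 0 < M)
    {c T : ℕ} (hc : c ∈ C) (hT : M * C.card ≤ T) (hcT : ∀ t < T, t ≡ T [MOD M] → (c, t) ∉ L) :
    ∃ s < T, s ≡ T [MOD M] ∧ IsRedundantSlot M L s := by
  have hmem : ∀ {s}, s ∈ (Finset.range T).filter (· ≡ T [MOD M]) ↔ s < T ∧ s ≡ T [MOD M] := by
    simp only [Finset.mem_filter, Finset.mem_range, implies_true]
  have hcard : (C.erase c).card < ((Finset.range T).filter (· ≡ T [MOD M])).card :=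
    (Finset.card_erase_lt_of_mem hc).trans_le (le_card_filter_modEq hM T hT)
  obtain ⟨s, hs, hred⟩ := exists_isRedundantSlot_of_card_lt hcard
    (fun s hs t ht => (hmem.mp hs).2.trans (hmem.mp ht).2.symm)
    (fun s hs x hx => Finset.mem_erase.mpr
      ⟨fun hxc => hcT s (hmem.mp hs).1 (hmem.mp hs).2 (hxc ▸ hx), hL.1 _ hx⟩)
  exact ⟨s, (hmem.mp hs).1, (hmem.mp hs).2, hred⟩

theorem IsRedundantSlot.discTime_ne {s x b δ : ℕ} (hs : IsRedundantSlot M L s) (hb : b ∣ M)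
    (hdisc : ∃ t, DiscoveredAt L x b δ t) : discTime L x b δ ≠ s := by
  intro heq
  obtain ⟨hxs, hsδ⟩ := heq ▸ discoveredAt_discTime hdisc
  obtain ⟨t, hts, hmod, hxt⟩ := hs x hxs
  have hearlier : DiscoveredAt L x b δ t := ⟨hxt, Eq.trans (hmod.of_dvd hb) hsδ⟩
  exact (hearlier.discTime_le.trans_lt hts).ne heq

end RedundantSlots

section Retune

variable {C B : Finset ℕ} {L : Set (ℕ × ℕ)} {M c s : ℕ}

theorem IsSchedule.retune (hL : IsSchedule C L) (hc : c ∈ C) (s : ℕ) :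
    IsSchedule C (retune L c s) := by
  constructor
  · rintro p (rfl | ⟨hp, -⟩)
    · exact hc
    · exact hL.1 p hp
  · rintro x y t (hx | ⟨hx, hxs⟩) (hy | ⟨hy, hys⟩)
    · exact (Prod.mk.inj hx).1.trans (Prod.mk.inj hy).1.symm
    · exact absurd (Prod.mk.inj hx).2 hys
    · exact absurd (Prod.mk.inj hy).2 hxs
    · exact hL.2 x y t hx hy

theorem IsRedundantSlot.discoveredAt_retune_discTime (hs : IsRedundantSlot M L s) {x b δ : ℕ}
    (hb : b ∣ M) (hdisc : ∃ t, DiscoveredAt L x b δ t) (c : ℕ) :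
    DiscoveredAt (retune L c s) x b δ (discTime L x b δ) :=
  have h := discoveredAt_discTime hdisc
  ⟨Or.inr ⟨h.1, hs.discTime_ne hb hdisc⟩, h.2⟩

theorem IsRedundantSlot.complete_retune (hs : IsRedundantSlot M L s) (hB : ∀ b ∈ B, b ∣ M)
    (hcomp : Complete C B L) (c : ℕ) : Complete C B (retune L c s) :=
  fun x hx b hb δ hδ =>
    ⟨_, hs.discoveredAt_retune_discTime (hB b hb) (hcomp x hx b hb δ hδ) c⟩

theorem IsRedundantSlot.MDT_retune_lt (hs : IsRedundantSlot M L s) (hB : ∀ b ∈ B, b ∣ M)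
    (hcomp : Complete C B L) {b δ : ℕ} (hc : c ∈ C) (hb : b ∈ B) (hδ : δ < b) (hsδ : s % b = δ)
    (hlt : s < discTime L c b δ) : MDT C B (retune L c s) < MDT C B L := by
  have hdisc : DiscoveredAt (retune L c s) c b δ s := ⟨Or.inl rfl, hsδ⟩
  exact MDT_lt_MDT
    (fun x hx d hd ε hε =>
      (hs.discoveredAt_retune_discTime (hB d hd) (hcomp x hx d hd ε hε) c).discTime_le)
    hc hb hδ (hdisc.discTime_le.trans_lt hlt)

end Retune

theorem stmt17_general (C B : Finset ℕ) (M : ℕ) (hM : 0 < M) (hB : ∀ b ∈ B, b ∣ M)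
    (L : Set (ℕ × ℕ)) (hL : IsSchedule C L) (hcomp : Complete C B L)
    (hopt : ∀ L' : Set (ℕ × ℕ), IsSchedule C L' → Complete C B L' → MDT C B L ≤ MDT C B L') :
    ∀ c ∈ C, ∀ b ∈ B, ∀ δ < b, discTime L c b δ ≤ M * C.card - 1 := by
  intro c hc b hb δ hδ
  by_contra! hlate
  have hTδ : discTime L c b δ % b = δ := (discoveredAt_discTime (hcomp c hc b hb δ hδ)).2
  have hmod : ∀ {t}, t ≡ discTime L c b δ [MOD M] → t % b = δ :=
    fun ht => Eq.trans (ht.of_dvd (hB b hb)) hTδ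
  have hunscanned : ∀ t < discTime L c b δ, t ≡ discTime L c b δ [MOD M] → (c, t) ∉ L :=
    fun t ht htT hct => ht.not_ge (DiscoveredAt.discTime_le ⟨hct, hmod htT⟩)
  obtain ⟨s, hsT, hsmod, hred⟩ := hL.exists_isRedundantSlot_lt hM hc (by lia) hunscanned
  exact (hopt _ (hL.retune hc s) (hred.complete_retune hB hcomp c)).not_gt
    (hred.MDT_retune_lt hB hcomp hc hb hδ (hmod hsmod) hsT)

/-- for `B ∈ 𝔽₂`, every MDT-optimal schedule is WDT-optimal:
all discovery times are at most `max(B)·|C| − 1`. -/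
theorem stmt17 (C B : Finset ℕ) (hC : C.Nonempty) (hB : B.Nonempty)
    (hBpos : ∀ b ∈ B, 0 < b)
    (hF2 : ∀ b ∈ B, b ∣ B.max' hB)
    (L : Set (ℕ × ℕ)) (hL : IsSchedule C L) (hcomp : Complete C B L)
    (hopt : ∀ L' : Set (ℕ × ℕ), IsSchedule C L' → Complete C B L' →
      MDT C B L ≤ MDT C B L') :
    ∀ c ∈ C, ∀ b ∈ B, ∀ δ < b, discTime L c b δ ≤ B.max' hB * C.card - 1 := by
  exact stmt17_general C B _ (hBpos _ (B.max'_mem hB)) hF2 L hL hcomp hopt
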